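/- arXiv:2212.10342 — 4 statements merged into one kernel-verified Lean document; each statement's English description precedes it below -/
import Mathlib

section
/- Let H be a real Hilbert space, F : ℝ → H differentiable, G : ℝ → H, and S, A : ℝ → B(H) with S(t) symmetric and A(t) antisymmetric for each t, and with t ↦ S(t) differentiable in operator norm with derivative S'(t). Suppose F'(t) = S(t)F(t) + A(t)F(t) + G(t) and F(t) ≠ 0, and define 𝒩(t) = -⟨S(t)F(t), F(t)⟩ / ‖F(t)‖². Then 𝒩 is differentiable at t and 𝒩'(t) ≤ ( -⟨S'(t)F(t), F(t)⟩ - 2⟨S(t)F(t), A(t)F(t)⟩ + (1/2)‖G(t)‖² ) / ‖F(t)‖². -/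
open RealInnerProductSpace

/-! If `R` is the Rayleigh quotient of a symmetric `S` at `x`, the residual `r = S x - R x` is
orthogonal to `x`. Along a curve `x` only the component of `x'` along `r` changes `R` to first
order (apart from the term coming from `S'`), and if `x' = S x + a + g` with `a` orthogonal to `x`,
then `⟪r, x'⟫ = ‖r‖² + ⟪S x, a⟫ + ⟪r, g⟫`. Young's inequality absorbs `⟪r, g⟫`
into `‖r‖²`, at the cost of `‖g‖² / 4`. -/

section RayleighQuotient

variable {𝕜 H : Type*} [RCLike 𝕜] [NormedAddCommGroup H] [InnerProductSpace 𝕜 H]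

open ContinuousLinearMap RCLike
open scoped InnerProductSpace

/-- The component of `T x` orthogonal to `x`, i.e. the defect of `x` as an eigenvector of `T` when
the eigenvalue is estimated by the Rayleigh quotient. That quotient is real, so this is the
orthogonal component only if `⟪T x, x⟫` is real, e.g. for symmetric `T`. -/
noncomputable def rayleighResidual (T : H →L[𝕜] H) (x : H) : H :=
  T x - (T.rayleighQuotient x : 𝕜) • x

lemma re_inner_rayleighResidual_left (T : H →L[𝕜] H) (x y : H) :
    re ⟪rayleighResidual T x, y⟫_𝕜 = re ⟪T x, y⟫_𝕜 - T.rayleighQuotient x * re ⟪x, y⟫_𝕜 := by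
  simp only [rayleighResidual, inner_sub_left, inner_smul_left, conj_ofReal, map_sub, re_ofReal_mul]

lemma re_inner_rayleighResidual_self (T : H →L[𝕜] H) (x : H) :
    re ⟪rayleighResidual T x, x⟫_𝕜 = 0 := by
  rcases eq_or_ne x 0 with rfl | hx
  · rw [inner_zero_right, map_zero]
  · rw [re_inner_rayleighResidual_left, inner_self_eq_norm_sq, ← reApplyInnerSelf_apply,
      div_mul_cancel₀ _ (by positivity), sub_self]

lemma re_inner_rayleighResidual_apply (T : H →L[𝕜] H) (x : H) :
    re ⟪rayleighResidual T x, T x⟫_𝕜 = ‖rayleighResidual T x‖ ^ 2 :=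
  calc re ⟪rayleighResidual T x, T x⟫_𝕜
    _ = re ⟪rayleighResidual T x, rayleighResidual T x + (T.rayleighQuotient x : 𝕜) • x⟫_𝕜 := by
      rw [rayleighResidual, sub_add_cancel]
    _ = ‖rayleighResidual T x‖ ^ 2 := by
      rw [inner_add_right, inner_smul_right, map_add, re_ofReal_mul,
        re_inner_rayleighResidual_self, mul_zero, add_zero, inner_self_eq_norm_sq]

lemma neg_norm_sq_div_four_le_norm_sq_add_re_inner (r g : H) :
    -(‖g‖ ^ 2 / 4) ≤ ‖r‖ ^ 2 + re ⟪r, g⟫_𝕜 := by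
  have hrg : -re ⟪r, g⟫_𝕜 ≤ ‖r‖ * ‖g‖ := by
    simpa only [inner_neg_left, map_neg, norm_neg] using re_inner_le_norm (𝕜 := 𝕜) (-r) g
  linarith [sq_nonneg (‖r‖ - ‖g‖ / 2)]

lemma le_re_inner_rayleighResidual (T : H →L[𝕜] H) {x a : H} (g : H)
    (ha : re ⟪x, a⟫_𝕜 = 0) :
    re ⟪T x, a⟫_𝕜 - ‖g‖ ^ 2 / 4 ≤ re ⟪rayleighResidual T x, T x + a + g⟫_𝕜 := by
  have hTx := re_inner_rayleighResidual_apply T x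
  have hra : re ⟪rayleighResidual T x, a⟫_𝕜 = re ⟪T x, a⟫_𝕜 := by
    rw [re_inner_rayleighResidual_left, ha, mul_zero, sub_zero]
  have hrg := neg_norm_sq_div_four_le_norm_sq_add_re_inner (𝕜 := 𝕜) (rayleighResidual T x) g
  rw [inner_add_right, inner_add_right, map_add, map_add, hTx, hra]
  linarith

variable [NormedSpace ℝ H] {F : ℝ → H} {F' : H} {S : ℝ → H →L[𝕜] H} {S' : H →L[𝕜] H} {t : ℝ}

lemma hasDerivAt_reApplyInnerSelf (hSsym : (S t).IsSymmetric) (hS : HasDerivAt S S' t)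
    (hF : HasDerivAt F F' t) :
    HasDerivAt (fun τ => (S τ).reApplyInnerSelf (F τ))
      (S'.reApplyInnerSelf (F t) + 2 * re ⟪S t (F t), F'⟫_𝕜) t := by
  have hSℝ : HasDerivAt (fun τ => (S τ).restrictScalars ℝ) (S'.restrictScalars ℝ) t :=
    (restrictScalarsL 𝕜 H H ℝ ℝ).hasFDerivAt.comp_hasDerivAt t hS
  have hre := reCLM.hasFDerivAt.comp_hasDerivAt t ((hSℝ.clm_apply hF).inner 𝕜 hF)
  refine hre.congr_deriv ?_
  have hsym : re ⟪S t F', F t⟫_𝕜 = re ⟪S t (F t), F'⟫_𝕜 := by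
    rw [inner_re_symm]
    exact congrArg re (hSsym (F t) F').symm
  simp only [reCLM_apply, coe_restrictScalars', inner_add_left, map_add, hsym,
    reApplyInnerSelf_apply]
  ring

lemma hasDerivAt_norm_sq_re_inner (hF : HasDerivAt F F' t) :
    HasDerivAt (fun τ => ‖F τ‖ ^ 2) (2 * re ⟪F t, F'⟫_𝕜) t := by
  have hre := reCLM.hasFDerivAt.comp_hasDerivAt t (hF.inner 𝕜 hF)
  refine (hre.congr_of_eventuallyEq ?_).congr_deriv ?_
  · exact .of_forall fun τ => (inner_self_eq_norm_sq (𝕜 := 𝕜) (F τ)).symm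
  · rw [reCLM_apply, map_add, inner_re_symm F' (F t), ← two_mul]

lemma hasDerivAt_rayleighQuotient (hSsym : (S t).IsSymmetric) (hS : HasDerivAt S S' t)
    (hF : HasDerivAt F F' t) (hFt : F t ≠ 0) :
    HasDerivAt (fun τ => (S τ).rayleighQuotient (F τ))
      ((S'.reApplyInnerSelf (F t) + 2 * re ⟪rayleighResidual (S t) (F t), F'⟫_𝕜) / ‖F t‖ ^ 2)
      t := by
  have hnum := hasDerivAt_reApplyInnerSelf hSsym hS hF
  have hden := hasDerivAt_norm_sq_re_inner (𝕜 := 𝕜) hF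
  refine (hnum.div hden (by positivity)).congr_deriv ?_
  rw [re_inner_rayleighResidual_left]
  simp only [rayleighQuotient]
  field_simp
  ring

theorem stmt_4_general {a g : H} (hSsym : (S t).IsSymmetric) (hS : HasDerivAt S S' t)
    (hF : HasDerivAt F (S t (F t) + a + g) t) (ha : re ⟪F t, a⟫_𝕜 = 0) (hFt : F t ≠ 0) :
    DifferentiableAt ℝ (fun τ => -(S τ).rayleighQuotient (F τ)) t ∧
    deriv (fun τ => -(S τ).rayleighQuotient (F τ)) t ≤
      (-re ⟪S' (F t), F t⟫_𝕜 - 2 * re ⟪S t (F t), a⟫_𝕜 + (1 / 2) * ‖g‖ ^ 2) / ‖F t‖ ^ 2 := by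
  have hderiv := (hasDerivAt_rayleighQuotient hSsym hS hF hFt).fun_neg
  refine ⟨hderiv.differentiableAt, ?_⟩
  rw [hderiv.deriv, ← neg_div, reApplyInnerSelf_apply]
  gcongr
  linarith [le_re_inner_rayleighResidual (S t) g ha]

end RayleighQuotient

/-- Abstract Carleman-commutator derivative estimate for the frequency function:
with `F` differentiable, `F'(t) = S(t)F(t) + A(t)F(t) + G(t)`, `S(τ)` symmetric,
`A(τ)` antisymmetric, `τ ↦ S(τ)` differentiable in operator norm with derivative `S'`,
`F(t) ≠ 0`, and `𝒩(τ) = -⟨S(τ)F(τ), F(τ)⟩/‖F(τ)‖²`, the function `𝒩` is differentiable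
at `t` and `𝒩'(t) ≤ (-⟨S'(t)F(t),F(t)⟩ - 2⟨S(t)F(t),A(t)F(t)⟩ + (1/2)‖G(t)‖²)/‖F(t)‖²`. -/
theorem stmt_4 {H : Type*} [NormedAddCommGroup H] [InnerProductSpace ℝ H] [CompleteSpace H]
    (F G : ℝ → H) (S A : ℝ → H →L[ℝ] H) (S' : ℝ → H →L[ℝ] H)
    (hSsym : ∀ τ, ∀ x y : H, ⟪S τ x, y⟫ = ⟪x, S τ y⟫)
    (hAanti : ∀ τ, ∀ x y : H, ⟪A τ x, y⟫ = -⟪x, A τ y⟫)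
    (hFdiff : Differentiable ℝ F)
    (hSdiff : ∀ τ, HasDerivAt S (S' τ) τ)
    (t : ℝ) (hF' : HasDerivAt F (S t (F t) + A t (F t) + G t) t) (hFt : F t ≠ 0)
    (𝒩 : ℝ → ℝ) (h𝒩 : ∀ τ, 𝒩 τ = -⟪S τ (F τ), F τ⟫ / ‖F τ‖ ^ 2) :
    DifferentiableAt ℝ 𝒩 t ∧
    deriv 𝒩 t ≤
      (-⟪S' t (F t), F t⟫ - 2 * ⟪S t (F t), A t (F t)⟫ + (1 / 2) * ‖G t‖ ^ 2) / ‖F t‖ ^ 2 := by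
  obtain rfl : 𝒩 = fun τ => -(S τ).rayleighQuotient (F τ) :=
    funext fun τ => (h𝒩 τ).trans (neg_div _ _)
  have hA : ⟪F t, A t (F t)⟫ = 0 := by
    linarith [hAanti t (F t) (F t), real_inner_comm (F t) (A t (F t))]
  exact stmt_4_general (hSsym t) (hSdiff t) hF' hA hFt
end

section
/- Let T > 0, h > 0, C₀ > 0 and C ≥ 0. Let y : (0,T] → ℝ be differentiable with y(t) > 0 for all t, let 𝒩 : (0,T] → ℝ be differentiable, and let G : (0,T] → [0,∞) be continuous. Assume for all t ∈ (0,T]: (i) |(1/2)y'(t) + 𝒩(t)y(t)| ≤ G(t)·√(y(t)), and (ii) 𝒩'(t) ≤ (1+C₀)/(T-t+h) · 𝒩(t) + G(t)²/y(t) + C/h². Then for all 0 < t₁ < t₂ ≤ T: exp( 2𝒩(t₂) ∫_{t₁}^{t₂} ((T-t₂+h)/(T-t+h))^{1+C₀} dt ) ≤ ( y(t₁)/y(t₂) ) · exp( 2(t₂-t₁)²·C/h² + 2(t₂-t₁)∫_{t₁}^{t₂} G(t)²/y(t) dt ) · exp( 2∫_{t₁}^{t₂} G(t)/√(y(t)) dt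 ). -/
/-!
Multiplying the frequency inequality `𝒩' ≤ (1+C₀)/(T-t+h) 𝒩 + G²/y + C/h²` by the decreasing
integrating factor `(T-t+h)^{1+C₀}` and integrating from `t` to `t₂` bounds `𝒩(t)` from below by
`((T-t₂+h)/(T-t+h))^{1+C₀} 𝒩(t₂)` minus a constant. Inserted into
`(log y)' ≤ -2𝒩 + 2G/√y`, this bounds `log y(t₂) - log y(t₁)` from above; exponentiate.
-/

section BackwardInterpolation

open Set MeasureTheory

variable {a b : ℝ}

theorem sub_le_integral_of_hasDerivWithinAt_Icc_of_le {g g' φ : ℝ → ℝ} (hab : a ≤ b)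
    (hg : ∀ t ∈ Icc a b, HasDerivWithinAt g (g' t) (Icc a b) t)
    (hφ : IntegrableOn φ (Icc a b)) (hle : ∀ t ∈ Ioo a b, g' t ≤ φ t) :
    g b - g a ≤ ∫ t in a..b, φ t :=
  intervalIntegral.sub_le_integral_of_hasDeriv_right_of_le hab (HasDerivWithinAt.continuousOn hg)
    (fun t ht ↦ ((hg t (Ioo_subset_Icc_self ht)).hasDerivAt
      (Icc_mem_nhds ht.1 ht.2)).hasDerivWithinAt) hφ hle

theorem log_sub_log_le_integral_of_deriv_le_mul {y y' φ : ℝ → ℝ} (hab : a ≤ b)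
    (hy : ∀ t ∈ Icc a b, HasDerivWithinAt y (y' t) (Icc a b) t)
    (hypos : ∀ t ∈ Icc a b, 0 < y t) (hφ : IntegrableOn φ (Icc a b))
    (hle : ∀ t ∈ Ioo a b, y' t ≤ φ t * y t) :
    Real.log (y b) - Real.log (y a) ≤ ∫ t in a..b, φ t :=
  sub_le_integral_of_hasDerivWithinAt_Icc_of_le hab
    (fun t ht ↦ (hy t ht).log (hypos t ht).ne') hφ
    fun t ht ↦ (div_le_iff₀ (hypos t (Ioo_subset_Icc_self ht))).2 (hle t ht)

theorem div_mul_le_add_integral_of_antitoneOn_integratingFactor {κ W u u' f : ℝ → ℝ}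
    (hab : a ≤ b) (hW : ∀ t ∈ Icc a b, HasDerivWithinAt W (-κ t * W t) (Icc a b) t)
    (hWpos : ∀ t ∈ Icc a b, 0 < W t) (hWanti : AntitoneOn W (Icc a b))
    (hu : ∀ t ∈ Icc a b, HasDerivWithinAt u (u' t) (Icc a b) t)
    (hf : IntegrableOn f (Icc a b)) (hf₀ : ∀ t ∈ Ioo a b, 0 ≤ f t)
    (hle : ∀ t ∈ Ioo a b, u' t ≤ κ t * u t + f t) :
    W b / W a * u b ≤ u a + ∫ t in a..b, f t := by
  have ha : a ∈ Icc a b := left_mem_Icc.2 hab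
  have hderiv_le : ∀ t ∈ Ioo a b, -κ t * W t * u t + W t * u' t ≤ W a * f t := by
    intro t ht
    have htI := Ioo_subset_Icc_self ht
    calc -κ t * W t * u t + W t * u' t = W t * (u' t - κ t * u t) := by ring
      _ ≤ W t * f t :=
        mul_le_mul_of_nonneg_left (by linarith [hle t ht]) (hWpos t htI).le
      _ ≤ W a * f t := mul_le_mul_of_nonneg_right (hWanti ha htI htI.1) (hf₀ t ht)
  have hsub : W b * u b - W a * u a ≤ ∫ t in a..b, W a * f t :=
    sub_le_integral_of_hasDerivWithinAt_Icc_of_le hab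
      (fun t ht ↦ (hW t ht).mul (hu t ht)) (hf.const_mul _) hderiv_le
  rw [intervalIntegral.integral_const_mul] at hsub
  rw [div_mul_eq_mul_div, div_le_iff₀ (hWpos a ha)]
  linarith

theorem hasDerivAt_sub_rpow {p R t : ℝ} (ht : t ≠ R) :
    HasDerivAt (fun s ↦ (R - s) ^ p) (-(p / (R - t)) * (R - t) ^ p) t := by
  have hne : R - t ≠ 0 := sub_ne_zero.2 ht.symm
  refine (((hasDerivAt_id' t).const_sub R).rpow_const (Or.inl hne)).congr_deriv ?_
  rw [Real.rpow_sub_one hne]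
  ring

theorem div_sub_rpow_mul_le_add_integral_of_deriv_le {p R : ℝ} {u u' f : ℝ → ℝ} (hp : 0 ≤ p)
    (hab : a ≤ b) (hbR : b < R)
    (hu : ∀ t ∈ Icc a b, HasDerivWithinAt u (u' t) (Icc a b) t)
    (hf : IntegrableOn f (Icc a b)) (hf₀ : ∀ t ∈ Ioo a b, 0 ≤ f t)
    (hle : ∀ t ∈ Ioo a b, u' t ≤ p / (R - t) * u t + f t) :
    ((R - b) / (R - a)) ^ p * u b ≤ u a + ∫ t in a..b, f t := by
  have hpos : ∀ t ∈ Icc a b, 0 < R - t := fun t ht ↦ sub_pos.2 (ht.2.trans_lt hbR)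
  rw [Real.div_rpow (hpos b (right_mem_Icc.2 hab)).le (hpos a (left_mem_Icc.2 hab)).le]
  refine div_mul_le_add_integral_of_antitoneOn_integratingFactor (W := fun t ↦ (R - t) ^ p) hab
    (fun t ht ↦ (hasDerivAt_sub_rpow (ht.2.trans_lt hbR).ne).hasDerivWithinAt)
    (fun t ht ↦ Real.rpow_pos_of_pos (hpos t ht) p) ?_ hu hf hf₀ hle
  exact fun s _ t ht hst ↦ Real.rpow_le_rpow (hpos t ht).le (sub_le_sub_left hst R) hp

theorem div_sub_rpow_mul_sub_integral_le_of_deriv_le {p R t : ℝ} {u u' f : ℝ → ℝ} (hp : 0 ≤ p)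
    (ht : t ∈ Icc a b) (hbR : b < R)
    (hu : ∀ s ∈ Icc a b, HasDerivWithinAt u (u' s) (Icc a b) s)
    (hf : IntegrableOn f (Icc a b)) (hf₀ : ∀ s ∈ Ioo a b, 0 ≤ f s)
    (hle : ∀ s ∈ Ioo a b, u' s ≤ p / (R - s) * u s + f s) :
    ((R - b) / (R - t)) ^ p * u b - ∫ s in a..b, f s ≤ u t := by
  have hab : a ≤ b := ht.1.trans ht.2
  have hIcc : Icc t b ⊆ Icc a b := Icc_subset_Icc_left ht.1
  have hIoo : Ioo t b ⊆ Ioo a b := Ioo_subset_Ioo_left ht.1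
  have hbound : ((R - b) / (R - t)) ^ p * u b ≤ u t + ∫ s in t..b, f s :=
    div_sub_rpow_mul_le_add_integral_of_deriv_le hp ht.2 hbR (fun s hs ↦ (hu s (hIcc hs)).mono hIcc)
      (hf.mono_set hIcc) (fun s hs ↦ hf₀ s (hIoo hs)) (fun s hs ↦ hle s (hIoo hs))
  have hf₀_ae : 0 ≤ᵐ[volume.restrict (Ioc a b)] f := by
    rw [← restrict_Ioo_eq_restrict_Ioc]
    exact ae_restrict_of_forall_mem measurableSet_Ioo hf₀
  have hmono : ∫ s in t..b, f s ≤ ∫ s in a..b, f s :=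
    intervalIntegral.integral_mono_interval ht.1 ht.2 le_rfl hf₀_ae
      ((intervalIntegrable_iff_integrableOn_Icc_of_le hab).2 hf)
  linarith

theorem continuousOn_div_sub_rpow {c p R : ℝ} {s : Set ℝ} (hc : c ≠ 0) (hR : R ∉ s) :
    ContinuousOn (fun t ↦ (c / (R - t)) ^ p) s := by
  have hne : ∀ t ∈ s, R - t ≠ 0 := fun t ht ↦ sub_ne_zero.2 (ne_of_mem_of_not_mem ht hR).symm
  exact (continuousOn_const.div (by fun_prop) hne).rpow_const
    fun t ht ↦ Or.inl (div_ne_zero hc (hne t ht))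

theorem two_mul_integral_rpow_le_log_div_add_integral {p R : ℝ} {y y' u u' f g : ℝ → ℝ}
    (hp : 0 ≤ p) (hab : a ≤ b) (hbR : b < R)
    (hy : ∀ t ∈ Icc a b, HasDerivWithinAt y (y' t) (Icc a b) t)
    (hypos : ∀ t ∈ Icc a b, 0 < y t)
    (hu : ∀ t ∈ Icc a b, HasDerivWithinAt u (u' t) (Icc a b) t)
    (hf : IntegrableOn f (Icc a b)) (hf₀ : ∀ t ∈ Ioo a b, 0 ≤ f t)
    (hg : IntegrableOn g (Icc a b))
    (hyle : ∀ t ∈ Ioo a b, y' t ≤ 2 * (g t - u t) * y t)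
    (hule : ∀ t ∈ Ioo a b, u' t ≤ p / (R - t) * u t + f t) :
    2 * u b * ∫ t in a..b, ((R - b) / (R - t)) ^ p ≤
      Real.log (y a / y b) + 2 * (b - a) * (∫ t in a..b, f t) + 2 * ∫ t in a..b, g t := by
  set A := ∫ t in a..b, f t
  set r : ℝ → ℝ := fun t ↦ ((R - b) / (R - t)) ^ p
  have hr : IntegrableOn r (Icc a b) :=
    (continuousOn_div_sub_rpow (sub_pos.2 hbR).ne' fun hR ↦ hbR.not_ge hR.2).integrableOn_Icc
  have hA : IntegrableOn (fun _ : ℝ ↦ A) (Icc a b) := continuousOn_const.integrableOn_Icc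
  have hu_lower : ∀ t ∈ Ioo a b, r t * u b - A ≤ u t := fun t ht ↦
    div_sub_rpow_mul_sub_integral_le_of_deriv_le hp (Ioo_subset_Icc_self ht) hbR hu hf hf₀ hule
  have hlog : Real.log (y b) - Real.log (y a) ≤ ∫ t in a..b, 2 * (g t + A - r t * u b) := by
    refine log_sub_log_le_integral_of_deriv_le_mul hab hy hypos
      (((hg.add hA).sub (hr.mul_const _)).const_mul 2) fun t ht ↦ (hyle t ht).trans ?_
    exact mul_le_mul_of_nonneg_right (by linarith [hu_lower t ht])
      (hypos t (Ioo_subset_Icc_self ht)).le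
  have hintegral : ∫ t in a..b, 2 * (g t + A - r t * u b) =
      2 * ((∫ t in a..b, g t) + (b - a) * A - (∫ t in a..b, r t) * u b) := by
    rw [← intervalIntegrable_iff_integrableOn_Icc_of_le hab] at hr hA hg
    rw [intervalIntegral.integral_const_mul,
      intervalIntegral.integral_sub (hg.add hA) (hr.mul_const _),
      intervalIntegral.integral_add hg hA, intervalIntegral.integral_mul_const,
      intervalIntegral.integral_const, smul_eq_mul]
  rw [Real.log_div (hypos a (left_mem_Icc.2 hab)).ne' (hypos b (right_mem_Icc.2 hab)).ne']
  linarith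

theorem le_two_mul_div_sqrt_sub_mul {y y' n G : ℝ} (h : 1 / 2 * y' + n * y ≤ G * √y) :
    y' ≤ 2 * (G / √y - n) * y := by
  have hG : G / √y * y = G * √y := by rw [div_mul_eq_mul_div, mul_div_assoc, Real.div_sqrt]
  linarith

theorem stmt_5_general {p R K t₁ t₂ : ℝ} (hp : 0 ≤ p) (hK : 0 ≤ K) (h₁₂ : t₁ ≤ t₂)
    (h₂ : t₂ < R) {y y' 𝒩 𝒩' G : ℝ → ℝ}
    (hy : ∀ t ∈ Icc t₁ t₂, HasDerivWithinAt y (y' t) (Icc t₁ t₂) t)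
    (hypos : ∀ t ∈ Icc t₁ t₂, 0 < y t)
    (h𝒩 : ∀ t ∈ Icc t₁ t₂, HasDerivWithinAt 𝒩 (𝒩' t) (Icc t₁ t₂) t)
    (hG : IntegrableOn G (Icc t₁ t₂)) (hG2 : IntegrableOn (fun t ↦ G t ^ 2) (Icc t₁ t₂))
    (hi : ∀ t ∈ Ioo t₁ t₂, 1 / 2 * y' t + 𝒩 t * y t ≤ G t * √(y t))
    (hii : ∀ t ∈ Ioo t₁ t₂, 𝒩' t ≤ p / (R - t) * 𝒩 t + G t ^ 2 / y t + K) :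
    Real.exp (2 * 𝒩 t₂ * ∫ t in t₁..t₂, ((R - t₂) / (R - t)) ^ p) ≤
      (y t₁ / y t₂) *
        Real.exp (2 * (t₂ - t₁) ^ 2 * K + 2 * (t₂ - t₁) * ∫ t in t₁..t₂, G t ^ 2 / y t) *
        Real.exp (2 * ∫ t in t₁..t₂, G t / √(y t)) := by
  have hycont : ContinuousOn y (Icc t₁ t₂) := HasDerivWithinAt.continuousOn hy
  have hypos' : ∀ t ∈ Ioo t₁ t₂, 0 < y t := fun t ht ↦ hypos t (Ioo_subset_Icc_self ht)
  have hG2y : IntegrableOn (fun t ↦ G t ^ 2 / y t) (Icc t₁ t₂) :=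
    hG2.mul_continuousOn (hycont.inv₀ fun t ht ↦ (hypos t ht).ne') isCompact_Icc
  have hGy : IntegrableOn (fun t ↦ G t / √(y t)) (Icc t₁ t₂) :=
    hG.mul_continuousOn (hycont.sqrt.inv₀ fun t ht ↦ (Real.sqrt_pos.2 (hypos t ht)).ne')
      isCompact_Icc
  have hKint : IntegrableOn (fun _ : ℝ ↦ K) (Icc t₁ t₂) := continuousOn_const.integrableOn_Icc
  have hlog := two_mul_integral_rpow_le_log_div_add_integral
    (f := fun t ↦ G t ^ 2 / y t + K) hp h₁₂ h₂ hy hypos h𝒩 (hG2y.add hKint)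
    (fun t ht ↦ add_nonneg (div_nonneg (sq_nonneg _) (hypos' t ht).le) hK) hGy
    (fun t ht ↦ le_two_mul_div_sqrt_sub_mul (hi t ht))
    (fun t ht ↦ (hii t ht).trans_eq (add_assoc _ _ _))
  rw [← intervalIntegrable_iff_integrableOn_Icc_of_le h₁₂] at hG2y hKint
  rw [intervalIntegral.integral_add hG2y hKint, intervalIntegral.integral_const,
    smul_eq_mul] at hlog
  have hratio : 0 < y t₁ / y t₂ :=
    div_pos (hypos t₁ (left_mem_Icc.2 h₁₂)) (hypos t₂ (right_mem_Icc.2 h₁₂))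
  rw [← Real.exp_log hratio, ← Real.exp_add, ← Real.exp_add, Real.exp_le_exp]
  linarith

end BackwardInterpolation

/-- Backward interpolation step of the Carleman-commutator method: if `y > 0` is
differentiable on `(0,T]`, `𝒩` is differentiable on `(0,T]`, `G ≥ 0` is continuous on
`(0,T]`, and for all `t ∈ (0,T]` one has `|(1/2)y'(t) + 𝒩(t)y(t)| ≤ G(t)√(y(t))` and
`𝒩'(t) ≤ (1+C₀)/(T-t+h)·𝒩(t) + G(t)²/y(t) + C/h²`, then for all `0 < t₁ < t₂ ≤ T`,
`exp(2𝒩(t₂)∫_{t₁}^{t₂}((T-t₂+h)/(T-t+h))^{1+C₀} dt)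
  ≤ (y(t₁)/y(t₂))·exp(2(t₂-t₁)²C/h² + 2(t₂-t₁)∫_{t₁}^{t₂}G²/y dt)·exp(2∫_{t₁}^{t₂}G/√y dt)`. -/
theorem stmt_5 (T h C₀ C : ℝ) (hT : 0 < T) (hh : 0 < h) (hC₀ : 0 < C₀) (hC : 0 ≤ C)
    (y y' 𝒩 𝒩' G : ℝ → ℝ)
    (hy : ∀ t ∈ Set.Ioc (0 : ℝ) T, HasDerivAt y (y' t) t)
    (hypos : ∀ t ∈ Set.Ioc (0 : ℝ) T, 0 < y t)
    (h𝒩 : ∀ t ∈ Set.Ioc (0 : ℝ) T, HasDerivAt 𝒩 (𝒩' t) t)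
    (hGcont : ContinuousOn G (Set.Ioc (0 : ℝ) T))
    (hGpos : ∀ t ∈ Set.Ioc (0 : ℝ) T, 0 ≤ G t)
    (hi : ∀ t ∈ Set.Ioc (0 : ℝ) T,
      |(1 / 2) * y' t + 𝒩 t * y t| ≤ G t * Real.sqrt (y t))
    (hii : ∀ t ∈ Set.Ioc (0 : ℝ) T,
      𝒩' t ≤ (1 + C₀) / (T - t + h) * 𝒩 t + G t ^ 2 / y t + C / h ^ 2) :
    ∀ t₁ t₂ : ℝ, 0 < t₁ → t₁ < t₂ → t₂ ≤ T →
      Real.exp (2 * 𝒩 t₂ * ∫ t in t₁..t₂, ((T - t₂ + h) / (T - t + h)) ^ (1 + C₀)) ≤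
        (y t₁ / y t₂) *
          Real.exp (2 * (t₂ - t₁) ^ 2 * C / h ^ 2 +
            2 * (t₂ - t₁) * ∫ t in t₁..t₂, G t ^ 2 / y t) *
          Real.exp (2 * ∫ t in t₁..t₂, G t / Real.sqrt (y t)) := by
  intro t₁ t₂ ht₁ ht₁₂ ht₂
  have hIcc : Set.Icc t₁ t₂ ⊆ Set.Ioc 0 T := fun t ht ↦ ⟨ht₁.trans_le ht.1, ht.2.trans ht₂⟩
  have hIoo : Set.Ioo t₁ t₂ ⊆ Set.Ioc 0 T := Set.Ioo_subset_Icc_self.trans hIcc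
  have hG : ContinuousOn G (Set.Icc t₁ t₂) := hGcont.mono hIcc
  simp only [sub_add_eq_add_sub, mul_div_assoc] at hii ⊢
  exact stmt_5_general (by linarith) (by positivity) ht₁₂.le (by linarith)
    (fun t ht ↦ (hy t (hIcc ht)).hasDerivWithinAt) (fun t ht ↦ hypos t (hIcc ht))
    (fun t ht ↦ (h𝒩 t (hIcc ht)).hasDerivWithinAt) hG.integrableOn_Icc
    (hG.pow 2).integrableOn_Icc (fun t ht ↦ le_of_abs_le (hi t (hIoo ht)))
    (fun t ht ↦ hii t (hIoo ht))
end

section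
/- Let T > 0, h > 0, C₀ > 0 and C ≥ 0. Let y : (0,T] → ℝ be differentiable with y(t) > 0 for all t, let 𝒩 : (0,T] → ℝ be differentiable, and let G : (0,T] → [0,∞) be continuous. Assume for all t ∈ (0,T]: (i) |(1/2)y'(t) + 𝒩(t)y(t)| ≤ G(t)·√(y(t)), and (ii) 𝒩'(t) ≤ (1+C₀)/(T-t+h) · 𝒩(t) + G(t)²/y(t) + C/h². Then for all 0 < t₁ < t₂ < t₃ ≤ T, one has the logarithmic convexity estimate y(t₂)^{1+M} ≤ y(t₁)^{M} · y(t₃) · e^{2D}, where M = ( ∫_{t₂}^{t₃} (T-t+h)^{-(1+C₀)} dt ) / ( ∫_{t₁}^{t₂} (T-t+h)^{-(1+C₀)} dt ) and D = M(t₂-t₁)²·C/h² + 2M(t₂-t₁)∫_{t₁}^{t₂} G(t)²/y(t) dt + ( ∫_{t₂}^{t₃} ((T-t₂+h)/(T-t+h))^{1+C₀} dt )·( ∫_{t₂}^{t₃} ( C/h² + G(t)²/y(t) ) dt ) + M∫_{t₁}^{t₂} G(t)/√(y(t)) dt + ∫_{t₂}^{t₃} G(t)/√(y(t)) dt. -/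
/-!
Let `k` be a positive nondecreasing kernel with `N' ≤ (k' / k) N + F` and `F ≥ 0`. Then
`(N / k)' ≤ F / k`, so `N / k` is nonincreasing up to an error controlled by `F`: on an interval
`[a, b]`, `N` lies above a multiple of `k` fixed by `N b`, and on `[b, c]` below the same multiple,
up to `∫ F`. If `u' = -N` up to an error `R`, integrating the two bounds gives
`u b - u a ≤ -(N b / k b) ∫_a^b k + …` and `u b - u c ≤ (N b / k b) ∫_b^c k + …`. The combination
with weights `M = ∫_b^c k / ∫_a^b k` and `1` eliminates the unknown `N b`.

For `u = (log y) / 2` the energy inequality makes `-N` the derivative of `u` up to `G / √y`, and the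
frequency inequality corresponds to the kernel `k t = (T - t + h) ^ (-(1 + C₀))`.
-/

namespace LogConvexity

open Set MeasureTheory

/-- The differential inequality `N' ≤ (k' / k) N + F` on `s` satisfied by a frequency function `N`,
with a positive nondecreasing kernel `k` and a nonnegative integrable source `F`. The functions `k'`
and `N'` stand for the derivatives of `k` and `N` on `s`. -/
structure FrequencyBoundOn (k k' N N' F : ℝ → ℝ) (s : Set ℝ) : Prop where
  kernel_hasDerivAt : ∀ t ∈ s, HasDerivAt k (k' t) t
  kernel_pos : ∀ t ∈ s, 0 < k t
  kernel_monotoneOn : MonotoneOn k s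
  hasDerivAt : ∀ t ∈ s, HasDerivAt N (N' t) t
  source_nonneg : ∀ t ∈ s, 0 ≤ F t
  source_integrableOn : IntegrableOn F s
  deriv_le : ∀ t ∈ s, N' t ≤ k' t / k t * N t + F t

theorem sub_le_integral_of_hasDerivAt_le {f f' φ : ℝ → ℝ} {a b : ℝ} (hab : a ≤ b)
    (hf : ∀ t ∈ Icc a b, HasDerivAt f (f' t) t) (hφ : IntegrableOn φ (Icc a b))
    (hle : ∀ t ∈ Icc a b, f' t ≤ φ t) : f b - f a ≤ ∫ t in a..b, φ t :=
  intervalIntegral.sub_le_integral_of_hasDeriv_right_of_le hab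
    (HasDerivAt.continuousOn hf) (fun t ht ↦ (hf t (Ioo_subset_Icc_self ht)).hasDerivWithinAt) hφ
    (fun t ht ↦ hle t (Ioo_subset_Icc_self ht))

theorem intervalIntegral_le_of_Icc_subset {F : ℝ → ℝ} {a b c d : ℝ} (hac : a ≤ c) (hcd : c ≤ d)
    (hdb : d ≤ b) (hF : IntegrableOn F (Icc a b)) (hF₀ : ∀ t ∈ Icc a b, 0 ≤ F t) :
    ∫ t in c..d, F t ≤ ∫ t in a..b, F t :=
  intervalIntegral.integral_mono_interval hac hcd hdb
    (ae_restrict_of_forall_mem measurableSet_Ioc fun t ht ↦ hF₀ t (Ioc_subset_Icc_self ht))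
    ((intervalIntegrable_iff_integrableOn_Icc_of_le (hac.trans (hcd.trans hdb))).2 hF)

namespace FrequencyBoundOn

variable {k k' N N' F u u' R : ℝ → ℝ} {s t : Set ℝ} {a b c x : ℝ}

theorem mono (H : FrequencyBoundOn k k' N N' F t) (hst : s ⊆ t) :
    FrequencyBoundOn k k' N N' F s where
  kernel_hasDerivAt x hx := H.kernel_hasDerivAt x (hst hx)
  kernel_pos x hx := H.kernel_pos x (hst hx)
  kernel_monotoneOn := H.kernel_monotoneOn.mono hst
  hasDerivAt x hx := H.hasDerivAt x (hst hx)
  source_nonneg x hx := H.source_nonneg x (hst hx)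
  source_integrableOn := H.source_integrableOn.mono_set hst
  deriv_le x hx := H.deriv_le x (hst hx)

theorem kernel_intervalIntegrable (H : FrequencyBoundOn k k' N N' F (Icc a b)) (hab : a ≤ b) :
    IntervalIntegrable k volume a b :=
  (HasDerivAt.continuousOn H.kernel_hasDerivAt).intervalIntegrable_of_Icc hab

theorem integral_kernel_pos (H : FrequencyBoundOn k k' N N' F (Icc a b)) (hab : a < b) :
    0 < ∫ t in a..b, k t :=
  intervalIntegral.intervalIntegral_pos_of_pos_on (H.kernel_intervalIntegrable hab.le)
    (fun t ht ↦ H.kernel_pos t (Ioo_subset_Icc_self ht)) hab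

theorem integral_kernel_div_pos (H : FrequencyBoundOn k k' N N' F (Icc a c)) (hab : a < b)
    (hbc : b < c) : 0 < (∫ t in b..c, k t) / ∫ t in a..b, k t :=
  div_pos ((H.mono (Icc_subset_Icc_left hab.le)).integral_kernel_pos hbc)
    ((H.mono (Icc_subset_Icc_right hbc.le)).integral_kernel_pos hab)

theorem div_kernel_sub_le (H : FrequencyBoundOn k k' N N' F (Icc a b)) (hab : a ≤ b) :
    N b / k b - N a / k a ≤ (∫ t in a..b, F t) / k a := by
  rw [← intervalIntegral.integral_div]
  refine sub_le_integral_of_hasDerivAt_le (f := fun t ↦ N t / k t) hab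
    (fun t ht ↦ (H.hasDerivAt t ht).div (H.kernel_hasDerivAt t ht) (H.kernel_pos t ht).ne')
    (H.source_integrableOn.div_const _) fun t ht ↦ ?_
  have hka : 0 < k a := H.kernel_pos a (left_mem_Icc.2 hab)
  have hkt : 0 < k t := H.kernel_pos t ht
  calc (N' t * k t - N t * k' t) / k t ^ 2
      = (N' t - k' t / k t * N t) / k t := by field_simp
    _ ≤ F t / k t := by gcongr; linarith [H.deriv_le t ht]
    _ ≤ F t / k a :=
        div_le_div_of_nonneg_left (H.source_nonneg t ht) hka
          (H.kernel_monotoneOn (left_mem_Icc.2 hab) ht ht.1)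

theorem mul_kernel_sub_le (H : FrequencyBoundOn k k' N N' F (Icc a b)) (hx : x ∈ Icc a b) :
    N b / k b * k x - ∫ t in a..b, F t ≤ N x := by
  have hkx : 0 < k x := H.kernel_pos x hx
  have hF : ∫ t in x..b, F t ≤ ∫ t in a..b, F t :=
    intervalIntegral_le_of_Icc_subset hx.1 hx.2 le_rfl H.source_integrableOn H.source_nonneg
  have hdecay : N b / k b ≤ (N x + ∫ t in a..b, F t) / k x := by
    calc N b / k b ≤ (N x + ∫ t in x..b, F t) / k x := by
          rw [add_div]
          linarith [(H.mono (Icc_subset_Icc_left hx.1)).div_kernel_sub_le hx.2]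
      _ ≤ (N x + ∫ t in a..b, F t) / k x := by gcongr
  linarith [(le_div_iff₀ hkx).1 hdecay]

theorem le_mul_kernel (H : FrequencyBoundOn k k' N N' F (Icc a b)) (hx : x ∈ Icc a b) :
    N x ≤ (N a + ∫ t in a..b, F t) / k a * k x := by
  have hka : 0 < k a := H.kernel_pos a (left_mem_Icc.2 (hx.1.trans hx.2))
  have hF : ∫ t in a..x, F t ≤ ∫ t in a..b, F t :=
    intervalIntegral_le_of_Icc_subset le_rfl hx.1 hx.2 H.source_integrableOn H.source_nonneg
  rw [← div_le_iff₀ (H.kernel_pos x hx)]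
  calc N x / k x ≤ (N a + ∫ t in a..x, F t) / k a := by
        rw [add_div]
        linarith [(H.mono (Icc_subset_Icc_right hx.2)).div_kernel_sub_le hx.1]
    _ ≤ (N a + ∫ t in a..b, F t) / k a := by gcongr

theorem right_sub_left_le (H : FrequencyBoundOn k k' N N' F (Icc a b)) (hab : a ≤ b)
    (hu : ∀ t ∈ Icc a b, HasDerivAt u (u' t) t) (hR : IntegrableOn R (Icc a b))
    (hle : ∀ t ∈ Icc a b, u' t + N t ≤ R t) :
    u b - u a ≤ (b - a) * (∫ t in a..b, F t) - N b / k b * (∫ t in a..b, k t) +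
      ∫ t in a..b, R t := by
  have hk : IntervalIntegrable (fun t ↦ N b / k b * k t) volume a b :=
    (H.kernel_intervalIntegrable hab).const_mul _
  have hR' : IntervalIntegrable R volume a b :=
    (intervalIntegrable_iff_integrableOn_Icc_of_le hab).2 hR
  have hφ := (intervalIntegrable_const (c := ∫ t in a..b, F t)).sub hk
  calc u b - u a ≤ ∫ t in a..b, ((∫ t in a..b, F t) - N b / k b * k t + R t) :=
        sub_le_integral_of_hasDerivAt_le hab hu
          ((intervalIntegrable_iff_integrableOn_Icc_of_le hab).1 (hφ.add hR'))
          fun t ht ↦ by linarith [hle t ht, H.mul_kernel_sub_le ht]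
    _ = _ := by
        rw [intervalIntegral.integral_add hφ hR',
          intervalIntegral.integral_sub intervalIntegrable_const hk,
          intervalIntegral.integral_const_mul, intervalIntegral.integral_const, smul_eq_mul]

theorem left_sub_right_le (H : FrequencyBoundOn k k' N N' F (Icc a b)) (hab : a ≤ b)
    (hu : ∀ t ∈ Icc a b, HasDerivAt u (u' t) t) (hR : IntegrableOn R (Icc a b))
    (hle : ∀ t ∈ Icc a b, -R t ≤ u' t + N t) :
    u a - u b ≤ (N a + ∫ t in a..b, F t) / k a * (∫ t in a..b, k t) + ∫ t in a..b, R t := by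
  have hk : IntervalIntegrable (fun t ↦ (N a + ∫ t in a..b, F t) / k a * k t) volume a b :=
    (H.kernel_intervalIntegrable hab).const_mul _
  have hR' : IntervalIntegrable R volume a b :=
    (intervalIntegrable_iff_integrableOn_Icc_of_le hab).2 hR
  calc u a - u b = -u b - -u a := by ring
    _ ≤ ∫ t in a..b, ((N a + ∫ t in a..b, F t) / k a * k t + R t) :=
        sub_le_integral_of_hasDerivAt_le hab (fun t ht ↦ (hu t ht).neg)
          ((intervalIntegrable_iff_integrableOn_Icc_of_le hab).1 (hk.add hR'))
          fun t ht ↦ by linarith [hle t ht, H.le_mul_kernel ht]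
    _ = _ := by
        rw [intervalIntegral.integral_add hk hR', intervalIntegral.integral_const_mul]

theorem three_point_le (H : FrequencyBoundOn k k' N N' F (Icc a c)) (hab : a < b) (hbc : b < c)
    (hu : ∀ t ∈ Icc a c, HasDerivAt u (u' t) t) (hR : IntegrableOn R (Icc a c))
    (hle : ∀ t ∈ Icc a c, |u' t + N t| ≤ R t) {M : ℝ}
    (hM : M = (∫ t in b..c, k t) / ∫ t in a..b, k t) :
    (1 + M) * u b ≤ M * u a + u c + (M * (b - a) * (∫ t in a..b, F t) +
      (∫ t in b..c, k t / k b) * (∫ t in b..c, F t) +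
      M * (∫ t in a..b, R t) + ∫ t in b..c, R t) := by
  have hl : Icc a b ⊆ Icc a c := Icc_subset_Icc_right hbc.le
  have hr : Icc b c ⊆ Icc a c := Icc_subset_Icc_left hab.le
  have hA : 0 < ∫ t in a..b, k t := (H.mono hl).integral_kernel_pos hab
  have hM₀ : 0 ≤ M := hM ▸ (H.integral_kernel_div_pos hab hbc).le
  have hMA : M * ∫ t in a..b, k t = ∫ t in b..c, k t := by rw [hM, div_mul_cancel₀ _ hA.ne']
  have hleft := mul_le_mul_of_nonneg_left ((H.mono hl).right_sub_left_le hab.le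
    (fun t ht ↦ hu t (hl ht)) (hR.mono_set hl) fun t ht ↦ (abs_le.1 (hle t (hl ht))).2) hM₀
  have hright := (H.mono hr).left_sub_right_le hbc.le
    (fun t ht ↦ hu t (hr ht)) (hR.mono_set hr) fun t ht ↦ (abs_le.1 (hle t (hr ht))).1
  have hcancel : M * (N b / k b * ∫ t in a..b, k t) = N b / k b * ∫ t in b..c, k t := by
    rw [mul_left_comm, hMA]
  have hsplit : (N b + ∫ t in b..c, F t) / k b * (∫ t in b..c, k t) =
      N b / k b * (∫ t in b..c, k t) + (∫ t in b..c, k t / k b) * ∫ t in b..c, F t := by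
    rw [intervalIntegral.integral_div]
    ring
  linarith

theorem of_rpow {p κ : ℝ} (hp : 0 ≤ p) (hs : ∀ t ∈ s, t < κ)
    (hN : ∀ t ∈ s, HasDerivAt N (N' t) t) (hF₀ : ∀ t ∈ s, 0 ≤ F t) (hF : IntegrableOn F s)
    (hle : ∀ t ∈ s, N' t ≤ p / (κ - t) * N t + F t) :
    FrequencyBoundOn (fun t ↦ (κ - t) ^ (-p)) (fun t ↦ p * (κ - t) ^ (-p - 1)) N N' F s where
  kernel_hasDerivAt t ht := by
    convert ((hasDerivAt_id' t).const_sub κ).rpow_const (p := -p)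
      (Or.inl (sub_pos.2 (hs t ht)).ne') using 1
    ring
  kernel_pos t ht := Real.rpow_pos_of_pos (sub_pos.2 (hs t ht)) _
  kernel_monotoneOn x _ t ht hxt :=
    Real.rpow_le_rpow_of_nonpos (sub_pos.2 (hs t ht)) (by linarith) (neg_nonpos.2 hp)
  hasDerivAt := hN
  source_nonneg := hF₀
  source_integrableOn := hF
  deriv_le t ht := by
    have hpos : 0 < κ - t := sub_pos.2 (hs t ht)
    have hlog : p * (κ - t) ^ (-p - 1) / (κ - t) ^ (-p) = p / (κ - t) := by
      rw [mul_div_assoc, ← Real.rpow_sub hpos, sub_sub_cancel_left, Real.rpow_neg_one,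
        ← div_eq_mul_inv]
    rw [hlog]
    exact hle t ht

end FrequencyBoundOn

theorem abs_half_logDeriv_add_le {y y' n g : ℝ} (hy : 0 < y)
    (h : |1 / 2 * y' + n * y| ≤ g * √y) : |1 / 2 * (y' / y) + n| ≤ g / √y := by
  have hdiv : 1 / 2 * (y' / y) + n = (1 / 2 * y' + n * y) / y := by field_simp
  calc |1 / 2 * (y' / y) + n| = |1 / 2 * y' + n * y| / y := by rw [hdiv, abs_div, abs_of_pos hy]
    _ ≤ g * √y / y := by gcongr
    _ = g / √y := by rw [mul_div_assoc, Real.sqrt_div_self', mul_one_div]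

theorem rpow_le_of_half_log_le {x y z M D : ℝ} (hx : 0 < x) (hy : 0 < y) (hz : 0 < z)
    (h : (1 + M) * (1 / 2 * Real.log y) ≤
      M * (1 / 2 * Real.log x) + 1 / 2 * Real.log z + D) :
    y ^ (1 + M) ≤ x ^ M * z * Real.exp (2 * D) := by
  calc y ^ (1 + M) = Real.exp (Real.log y * (1 + M)) := Real.rpow_def_of_pos hy _
    _ ≤ Real.exp (Real.log x * M + Real.log z + 2 * D) := Real.exp_le_exp.2 (by linarith)
    _ = x ^ M * z * Real.exp (2 * D) := by
        rw [Real.exp_add, Real.exp_add, Real.exp_log hz, ← Real.rpow_def_of_pos hx]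

theorem integrableOn_sq_div_and_div_sqrt {G y : ℝ → ℝ} {K : Set ℝ} (hK : IsCompact K)
    (hG : AEStronglyMeasurable G (volume.restrict K)) (hG2 : IntegrableOn (fun t ↦ G t ^ 2) K)
    (hy : ContinuousOn y K) (hy₀ : ∀ t ∈ K, 0 < y t) :
    IntegrableOn (fun t ↦ G t ^ 2 / y t) K ∧ IntegrableOn (fun t ↦ G t / √(y t)) K := by
  have : IsFiniteMeasure (volume.restrict K) := isFiniteMeasure_restrict.2 hK.measure_ne_top
  have hG1 : IntegrableOn G K := ((memLp_two_iff_integrable_sq hG).2 hG2).integrable one_le_two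
  simp only [div_eq_mul_inv]
  exact ⟨hG2.mul_continuousOn (hy.inv₀ fun t ht ↦ (hy₀ t ht).ne') hK,
    hG1.mul_continuousOn (hy.sqrt.inv₀ fun t ht ↦ (Real.sqrt_pos.2 (hy₀ t ht)).ne') hK⟩

theorem mul_integral_const_add_le {g : ℝ → ℝ} {K M a b : ℝ} (hM : 0 ≤ M) (hab : a ≤ b)
    (hg : IntegrableOn g (Icc a b)) (hg₀ : ∀ t ∈ Icc a b, 0 ≤ g t) :
    M * (b - a) * (∫ t in a..b, (K + g t)) ≤
      M * (b - a) ^ 2 * K + 2 * M * (b - a) * ∫ t in a..b, g t := by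
  have hnonneg : 0 ≤ M * (b - a) * ∫ t in a..b, g t :=
    mul_nonneg (mul_nonneg hM (sub_nonneg.2 hab)) (intervalIntegral.integral_nonneg hab hg₀)
  rw [intervalIntegral.integral_add intervalIntegrable_const
    ((intervalIntegrable_iff_integrableOn_Icc_of_le hab).2 hg), intervalIntegral.integral_const,
    smul_eq_mul]
  linarith

theorem integral_rpow_neg_div {κ p b c : ℝ} (hbc : b ≤ c) (hc : c ≤ κ) :
    ∫ t in b..c, (κ - t) ^ (-p) / (κ - b) ^ (-p) =
      ∫ t in b..c, ((κ - b) / (κ - t)) ^ p := by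
  refine intervalIntegral.integral_congr fun t ht ↦ ?_
  rw [uIcc_of_le hbc] at ht
  have ht' : 0 ≤ κ - t := by linarith [ht.2]
  have hb : 0 ≤ κ - b := by linarith
  simp only [Real.rpow_neg ht', Real.rpow_neg hb, Real.div_rpow hb ht', inv_div_inv]

end LogConvexity

open LogConvexity Set MeasureTheory in
theorem stmt_6_general (T h C₀ C : ℝ) (hh : 0 < h) (hC₀ : -1 ≤ C₀) (hC : 0 ≤ C)
    (y y' 𝒩 𝒩' G : ℝ → ℝ)
    (hy : ∀ t ∈ Ioc (0 : ℝ) T, HasDerivAt y (y' t) t)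
    (hypos : ∀ t ∈ Ioc (0 : ℝ) T, 0 < y t)
    (h𝒩 : ∀ t ∈ Ioc (0 : ℝ) T, HasDerivAt 𝒩 (𝒩' t) t)
    (hGmeas : AEStronglyMeasurable G (volume.restrict (Ioc 0 T)))
    (hGsq : LocallyIntegrableOn (fun t ↦ G t ^ 2) (Ioc 0 T))
    (hi : ∀ t ∈ Ioc (0 : ℝ) T, |(1 / 2) * y' t + 𝒩 t * y t| ≤ G t * √(y t))
    (hii : ∀ t ∈ Ioc (0 : ℝ) T,
      𝒩' t ≤ (1 + C₀) / (T - t + h) * 𝒩 t + G t ^ 2 / y t + C / h ^ 2) :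
    ∀ t₁ t₂ t₃ : ℝ, 0 < t₁ → t₁ < t₂ → t₂ < t₃ → t₃ ≤ T →
      ∀ M D : ℝ,
        M = (∫ t in t₂..t₃, (T - t + h) ^ (-(1 + C₀))) /
              (∫ t in t₁..t₂, (T - t + h) ^ (-(1 + C₀))) →
        D = M * (t₂ - t₁) ^ 2 * C / h ^ 2 +
              2 * M * (t₂ - t₁) * (∫ t in t₁..t₂, G t ^ 2 / y t) +
              (∫ t in t₂..t₃, ((T - t₂ + h) / (T - t + h)) ^ (1 + C₀)) *
                (∫ t in t₂..t₃, (C / h ^ 2 + G t ^ 2 / y t)) +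
              M * (∫ t in t₁..t₂, G t / √(y t)) +
              (∫ t in t₂..t₃, G t / √(y t)) →
        y t₂ ^ (1 + M) ≤ y t₁ ^ M * y t₃ * Real.exp (2 * D) := by
  intro t₁ t₂ t₃ h₁ h₁₂ h₂₃ h₃ M D hM hD
  have hshift (t : ℝ) : T - t + h = T + h - t := by ring
  simp only [hshift] at hii hM hD
  have hsub : Icc t₁ t₃ ⊆ Ioc 0 T := fun t ht ↦ ⟨h₁.trans_le ht.1, ht.2.trans h₃⟩
  have hsub₁₂ : Icc t₁ t₂ ⊆ Icc t₁ t₃ := Icc_subset_Icc_right h₂₃.le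
  have hF₀ : ∀ t ∈ Icc t₁ t₃, 0 ≤ G t ^ 2 / y t :=
    fun t ht ↦ div_nonneg (sq_nonneg _) (hypos t (hsub ht)).le
  obtain ⟨hF, hR⟩ := integrableOn_sq_div_and_div_sqrt isCompact_Icc
    (hGmeas.mono_set hsub) (hGsq.integrableOn_compact_subset hsub isCompact_Icc)
    (HasDerivAt.continuousOn fun t ht ↦ hy t (hsub ht)) fun t ht ↦ hypos t (hsub ht)
  have H := FrequencyBoundOn.of_rpow (p := 1 + C₀) (κ := T + h)
    (F := fun t ↦ C / h ^ 2 + G t ^ 2 / y t) (s := Icc t₁ t₃) (by linarith)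
    (fun t ht ↦ by linarith [ht.2]) (fun t ht ↦ h𝒩 t (hsub ht))
    (fun t ht ↦ add_nonneg (by positivity) (hF₀ t ht))
    ((integrableOn_const (by simp)).add hF) (fun t ht ↦ by linarith [hii t (hsub ht)])
  have key := H.three_point_le h₁₂ h₂₃
    (fun t ht ↦ ((hy t (hsub ht)).log (hypos t (hsub ht)).ne').const_mul (1 / 2)) hR
    (fun t ht ↦ abs_half_logDeriv_add_le (hypos t (hsub ht)) (hi t (hsub ht))) hM
  have hsource := mul_integral_const_add_le (K := C / h ^ 2)
    (hM ▸ (H.integral_kernel_div_pos h₁₂ h₂₃).le) h₁₂.le (hF.mono_set hsub₁₂)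
    fun t ht ↦ hF₀ t (hsub₁₂ ht)
  rw [integral_rpow_neg_div h₂₃.le (by linarith)] at key
  rw [← mul_div_assoc] at hsource
  exact rpow_le_of_half_log_le (hypos t₁ ⟨h₁, by linarith⟩) (hypos t₂ ⟨by linarith, by linarith⟩)
    (hypos t₃ ⟨by linarith, h₃⟩) (by linarith)

/-- Three-point logarithmic convexity inequality: under the two differential inequalities
for `y`, `𝒩`, `G` on `(0,T]`, for all `0 < t₁ < t₂ < t₃ ≤ T` one has
`y(t₂)^{1+M} ≤ y(t₁)^M · y(t₃) · e^{2D}` with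
`M = (∫_{t₂}^{t₃}(T-t+h)^{-(1+C₀)} dt)/(∫_{t₁}^{t₂}(T-t+h)^{-(1+C₀)} dt)` and
`D = M(t₂-t₁)²C/h² + 2M(t₂-t₁)∫_{t₁}^{t₂}G²/y dt
    + (∫_{t₂}^{t₃}((T-t₂+h)/(T-t+h))^{1+C₀} dt)·(∫_{t₂}^{t₃}(C/h² + G²/y) dt)
    + M∫_{t₁}^{t₂}G/√y dt + ∫_{t₂}^{t₃}G/√y dt`. -/
theorem stmt_6 (T h C₀ C : ℝ) (hT : 0 < T) (hh : 0 < h) (hC₀ : 0 < C₀) (hC : 0 ≤ C)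
    (y y' 𝒩 𝒩' G : ℝ → ℝ)
    (hy : ∀ t ∈ Set.Ioc (0 : ℝ) T, HasDerivAt y (y' t) t)
    (hypos : ∀ t ∈ Set.Ioc (0 : ℝ) T, 0 < y t)
    (h𝒩 : ∀ t ∈ Set.Ioc (0 : ℝ) T, HasDerivAt 𝒩 (𝒩' t) t)
    (hGcont : ContinuousOn G (Set.Ioc (0 : ℝ) T))
    (hGpos : ∀ t ∈ Set.Ioc (0 : ℝ) T, 0 ≤ G t)
    (hi : ∀ t ∈ Set.Ioc (0 : ℝ) T,
      |(1 / 2) * y' t + 𝒩 t * y t| ≤ G t * Real.sqrt (y t))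
    (hii : ∀ t ∈ Set.Ioc (0 : ℝ) T,
      𝒩' t ≤ (1 + C₀) / (T - t + h) * 𝒩 t + G t ^ 2 / y t + C / h ^ 2) :
    ∀ t₁ t₂ t₃ : ℝ, 0 < t₁ → t₁ < t₂ → t₂ < t₃ → t₃ ≤ T →
      ∀ M D : ℝ,
        M = (∫ t in t₂..t₃, (T - t + h) ^ (-(1 + C₀))) /
              (∫ t in t₁..t₂, (T - t + h) ^ (-(1 + C₀))) →
        D = M * (t₂ - t₁) ^ 2 * C / h ^ 2 +
              2 * M * (t₂ - t₁) * (∫ t in t₁..t₂, G t ^ 2 / y t) +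
              (∫ t in t₂..t₃, ((T - t₂ + h) / (T - t + h)) ^ (1 + C₀)) *
                (∫ t in t₂..t₃, (C / h ^ 2 + G t ^ 2 / y t)) +
              M * (∫ t in t₁..t₂, G t / Real.sqrt (y t)) +
              (∫ t in t₂..t₃, G t / Real.sqrt (y t)) →
        y t₂ ^ (1 + M) ≤ y t₁ ^ M * y t₃ * Real.exp (2 * D) :=
  stmt_6_general T h C₀ C hh (by linarith) hC y y' 𝒩 𝒩' G hy hypos h𝒩
    (hGcont.aestronglyMeasurable measurableSet_Ioc)
    ((hGcont.pow 2).locallyIntegrableOn measurableSet_Ioc) hi hii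
end

section
/- Let A, B, r > 0 with A ≤ B, let K ≥ 1, and let M, C₁, C₂ > 0. Suppose that for every h > 0 one has A^{1+M} ≤ K·e^{C₁/h}·B^{M}·r + K·e^{-C₂/h}·B^{1+M}. Then A^{(1+M)(1 + C₁/C₂)} ≤ (2K)^{1 + C₁/C₂} · B^{M + (1+M)C₁/C₂} · r. -/
/-! The bound at parameter `h` is the sum of a growing term and an exponentially small one. Choose
`h` so that the small term is exactly half of the left-hand side; it is then absorbed, and what
remains is a bound by twice the growing term, which at this `h` is a power of `2 * b / P`. -/

theorem rpow_one_add_div_le_of_forall_le_exp_add_exp {P a b α β : ℝ} (hP : 0 < P)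
    (hPb : P < 2 * b) (hβ : 0 < β)
    (H : ∀ h : ℝ, 0 < h → P ≤ a * Real.exp (α / h) + b * Real.exp (-β / h)) :
    P ^ (1 + α / β) ≤ 2 * a * (2 * b) ^ (α / β) := by
  have hb : 0 < b := by linarith
  have hlog : 0 < Real.log (2 * b / P) := Real.log_pos ((one_lt_div hP).2 hPb)
  obtain ⟨h, hh, balance⟩ : ∃ h : ℝ, 0 < h ∧ Real.exp (β / h) = 2 * b / P :=
    ⟨β / Real.log (2 * b / P), div_pos hβ hlog, by
      rw [div_div_cancel₀ hβ.ne', Real.exp_log (by positivity)]⟩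
  have small_eq : b * Real.exp (-β / h) = P / 2 := by
    rw [neg_div, Real.exp_neg, balance]
    field_simp
  have growing_eq : Real.exp (α / h) = (2 * b) ^ (α / β) / P ^ (α / β) := by
    rw [← Real.div_rpow (by positivity) hP.le, ← balance, ← Real.exp_mul,
      div_mul_div_cancel₀' hβ.ne']
  have absorbed : P ≤ 2 * a * Real.exp (α / h) := by linarith [H h hh]
  calc
    P ^ (1 + α / β) = P * P ^ (α / β) := by rw [Real.rpow_add hP, Real.rpow_one]
    _ ≤ 2 * a * Real.exp (α / h) * P ^ (α / β) := by gcongr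
    _ = 2 * a * (2 * b) ^ (α / β) := by
      rw [growing_eq, mul_assoc, div_mul_cancel₀ _ (Real.rpow_pos_of_pos hP _).ne']

theorem stmt_9_general {A B r K M C₁ C₂ : ℝ} (hA : 0 < A) (hB : 0 < B)
    (hAB : A ^ (1 + M) < 2 * K * B ^ (1 + M)) (hC₂ : 0 < C₂)
    (H : ∀ h : ℝ, 0 < h →
      A ^ (1 + M) ≤ K * Real.exp (C₁ / h) * B ^ M * r + K * Real.exp (-C₂ / h) * B ^ (1 + M)) :
    A ^ ((1 + M) * (1 + C₁ / C₂)) ≤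
      (2 * K) ^ (1 + C₁ / C₂) * B ^ (M + (1 + M) * C₁ / C₂) * r := by
  have hP : 0 < A ^ (1 + M) := Real.rpow_pos_of_pos hA _
  have hQ : 0 < B ^ (1 + M) := Real.rpow_pos_of_pos hB _
  have hK : 0 < 2 * K := pos_of_mul_pos_left (hP.trans hAB) hQ.le
  calc
    A ^ ((1 + M) * (1 + C₁ / C₂)) = (A ^ (1 + M)) ^ (1 + C₁ / C₂) := Real.rpow_mul hA.le _ _
    _ ≤ 2 * (K * B ^ M * r) * (2 * (K * B ^ (1 + M))) ^ (C₁ / C₂) :=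
      rpow_one_add_div_le_of_forall_le_exp_add_exp hP (by linarith) hC₂
        fun h hh ↦ (H h hh).trans_eq (by ring)
    _ = (2 * K) ^ (1 + C₁ / C₂) * B ^ (M + (1 + M) * C₁ / C₂) * r := by
      rw [← mul_assoc 2 K (B ^ (1 + M)), Real.mul_rpow hK.le hQ.le, ← Real.rpow_mul hB.le,
        Real.rpow_add hK, Real.rpow_one, mul_div_assoc, Real.rpow_add hB]
      ring

/-- Abstract parameter-optimization lemma: if for every `h > 0`,
`A^{1+M} ≤ K·e^{C₁/h}·B^{M}·r + K·e^{-C₂/h}·B^{1+M}`, then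
`A^{(1+M)(1+C₁/C₂)} ≤ (2K)^{1+C₁/C₂} · B^{M+(1+M)C₁/C₂} · r`. -/
theorem stmt_9 (A B r K M C₁ C₂ : ℝ) (hA : 0 < A) (hB : 0 < B) (hr : 0 < r)
    (hAB : A ≤ B) (hK : 1 ≤ K) (hM : 0 < M) (hC₁ : 0 < C₁) (hC₂ : 0 < C₂)
    (H : ∀ h : ℝ, 0 < h →
      A ^ (1 + M) ≤ K * Real.exp (C₁ / h) * B ^ M * r + K * Real.exp (-C₂ / h) * B ^ (1 + M)) :
    A ^ ((1 + M) * (1 + C₁ / C₂)) ≤ (2 * K) ^ (1 + C₁ / C₂) * B ^ (M + (1 + M) * C₁ / C₂) * r := by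
  have hAB' : A ^ (1 + M) < 2 * K * B ^ (1 + M) :=
    (Real.rpow_le_rpow hA.le hAB (by linarith)).trans_lt <|
      lt_mul_of_one_lt_left (Real.rpow_pos_of_pos hB _) (by linarith)
  exact stmt_9_general hA hB hAB' hC₂ H
end
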